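/- arXiv:2110.03838 — 4 statements merged into one kernel-verified Lean document; each statement's English description precedes it below -/
import Mathlib

section
/- Let p ≥ 1 and let K ∈ ℝ^{N_p×N_p} be the on-diagonal coefficient matrix, with 𝓘_p ordered so that first come the indices 𝓒₁ = {(0,r) : 0 ≤ r ≤ p} in increasing r, then 𝓒₂ = {(s,0) : 1 ≤ s ≤ p} in increasing s, then the remaining indices 𝓒₃ = {ξ ∈ ℕ² : ξ₁ ≥ 1, ξ₂ ≥ 1, ξ₁+ξ₂ ≤ p}. Then: (1) K_{1,1} = 1 and K_{j,1} = 0 for all 2 ≤ j ≤ N_p; (2) K has the block form K = [[A, B],[0, D]] where A ∈ ℝ^{(2p+1)×(2p+1)} is the block corresponding to 𝓒₁∪𝓒₂, D ∈ ℝ^{(p(p−1)/2)×(p(p−1)/2)} corresponds to 𝓒₃, and the lower-left block is zero, so that det K = det A · det D; and (3) the block A is non-singular. -/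
open MeasureTheory Real

/-- The set `𝓖_γ` of all sign changes of `(γ₁, γ₂)`. -/
def Gon (γ : ℕ × ℕ) : Finset (ℤ × ℤ) :=
  {((γ.1 : ℤ), (γ.2 : ℤ)), (-(γ.1 : ℤ), (γ.2 : ℤ)), ((γ.1 : ℤ), -(γ.2 : ℤ)),
    (-(γ.1 : ℤ), -(γ.2 : ℤ))}

/-! On `𝓖_γ` the even monomial `β ↦ β^{2ξ}` is constant, so `K_{ij} = #𝓖_{ξ_j} · ξ_j^{2ξ_i}`, which
vanishes unless the support of `ξ_i` is contained in that of `ξ_j`. Hence `K` is block upper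
triangular with respect to `𝓒₁, 𝓒₂, 𝓒₃`, and up to nonzero column factors its first two diagonal
blocks are Vandermonde matrices in the squares of distinct natural numbers. -/

theorem det_eq_det_mul_det_of_lower_left_eq_zero {R : Type*} [CommRing R] {N k : ℕ} (hk : k ≤ N)
    (M : Matrix (Fin N) (Fin N) R) (hM : ∀ i j : Fin N, k ≤ (i : ℕ) → (j : ℕ) < k → M i j = 0) :
    M.det = (M.submatrix (Fin.castLE hk) (Fin.castLE hk)).det *
      (M.submatrix (fun i : Fin (N - k) => Fin.cast (Nat.add_sub_of_le hk) (Fin.natAdd k i))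
        fun j : Fin (N - k) => Fin.cast (Nat.add_sub_of_le hk) (Fin.natAdd k j)).det := by
  let e : Fin k ⊕ Fin (N - k) ≃ Fin N :=
    finSumFinEquiv.trans (finCongr (Nat.add_sub_of_le hk))
  have lower_left : (M.submatrix e e).toBlocks₂₁ = 0 := by
    ext i j
    exact hM _ _ (Nat.le_add_right k i) j.isLt
  rw [← Matrix.det_submatrix_equiv_self e M, ← Matrix.fromBlocks_toBlocks (M.submatrix e e),
    lower_left, Matrix.det_fromBlocks_zero₂₁]
  rfl

theorem det_natCast_pow_ne_zero (R : Type*) [CommRing R] [IsDomain R] [CharZero R] (n k : ℕ) :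
    (Matrix.of fun i j : Fin n => (((j : ℕ) + k : ℕ) : R) ^ (2 * ((i : ℕ) + k))).det ≠ 0 := by
  let x : Fin n → R := fun j => (((j : ℕ) + k : ℕ) : R) ^ 2
  have x_injective : Function.Injective x := by
    intro a b hab
    have hsq : ((a : ℕ) + k) ^ 2 = ((b : ℕ) + k) ^ 2 := by
      simp only [x] at hab
      exact_mod_cast hab
    exact Fin.ext (Nat.add_right_cancel (Nat.pow_left_injective two_ne_zero hsq))
  have x_pow_ne_zero (j : Fin n) : x j ^ k ≠ 0 := by
    rcases k.eq_zero_or_pos with rfl | hk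
    · simp
    · exact pow_ne_zero _ (pow_ne_zero _ (Nat.cast_ne_zero.2 (by omega)))
  have column_factor :
      (Matrix.of fun i j : Fin n => (((j : ℕ) + k : ℕ) : R) ^ (2 * ((i : ℕ) + k))) =
        Matrix.of fun i j => x j ^ k * (Matrix.vandermonde x).transpose i j := by
    ext i j
    simp only [Matrix.of_apply, Matrix.transpose_apply, Matrix.vandermonde_apply, x]
    ring
  rw [column_factor, Matrix.det_mul_row, Matrix.det_transpose]
  exact mul_ne_zero (Finset.prod_ne_zero_iff.2 fun j _ => x_pow_ne_zero j)
    (Matrix.det_vandermonde_ne_zero_iff.2 x_injective)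

theorem natCast_card_Gon_ne_zero (R : Type*) [Semiring R] [CharZero R] (γ : ℕ × ℕ) :
    ((Gon γ).card : R) ≠ 0 :=
  Nat.cast_ne_zero.2 (Finset.card_ne_zero_of_mem (Finset.mem_insert_self _ _))

theorem pow_mul_pow_of_mem_Gon (R : Type*) [Ring R] {γ : ℕ × ℕ} {β : ℤ × ℤ} (hβ : β ∈ Gon γ)
    (a b : ℕ) :
    (β.1 : R) ^ (2 * a) * (β.2 : R) ^ (2 * b) = (γ.1 : R) ^ (2 * a) * (γ.2 : R) ^ (2 * b) := by
  simp only [Gon, Finset.mem_insert, Finset.mem_singleton] at hβ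
  rcases hβ with rfl | rfl | rfl | rfl <;> simp [pow_mul]

/-- The on-diagonal coefficient matrix `K_{ij} = ∑_{β ∈ 𝓖_{ξ_j}} β^{2ξ_i}` of an arbitrary family
`ξ` of multi-indices; for `ξ` an enumeration of `𝓘_p` it is the matrix `K` of the paper, and its
diagonal blocks are the matrices of the corresponding subfamilies. -/
def onDiagonalMatrix (R : Type*) [CommRing R] {ι : Type*} (ξ : ι → ℕ × ℕ) : Matrix ι ι R :=
  Matrix.of fun i j => ∑ β ∈ Gon (ξ j), (β.1 : R) ^ (2 * (ξ i).1) * (β.2 : R) ^ (2 * (ξ i).2)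

section OnDiagonalMatrix

variable {R : Type*} [CommRing R] {ι : Type*}

theorem onDiagonalMatrix_apply (ξ : ι → ℕ × ℕ) (i j : ι) :
    onDiagonalMatrix R ξ i j =
      (Gon (ξ j)).card * (((ξ j).1 : R) ^ (2 * (ξ i).1) * ((ξ j).2 : R) ^ (2 * (ξ i).2)) := by
  rw [onDiagonalMatrix, Matrix.of_apply,
    Finset.sum_congr rfl fun β hβ => pow_mul_pow_of_mem_Gon R hβ _ _, Finset.sum_const,
    nsmul_eq_mul]

theorem onDiagonalMatrix_eq_zero_of_fst {ξ : ι → ℕ × ℕ} {i j : ι} (hj : (ξ j).1 = 0)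
    (hi : (ξ i).1 ≠ 0) : onDiagonalMatrix R ξ i j = 0 := by
  simp [onDiagonalMatrix_apply, hj, hi]

theorem onDiagonalMatrix_eq_zero_of_snd {ξ : ι → ℕ × ℕ} {i j : ι} (hj : (ξ j).2 = 0)
    (hi : (ξ i).2 ≠ 0) : onDiagonalMatrix R ξ i j = 0 := by
  simp [onDiagonalMatrix_apply, hj, hi]

theorem onDiagonalMatrix_apply_eq_one {ξ : ι → ℕ × ℕ} {i : ι} (hi : ξ i = (0, 0)) :
    onDiagonalMatrix R ξ i i = 1 := by
  simp [onDiagonalMatrix_apply, hi, Gon]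

theorem onDiagonalMatrix_eq_zero_of_ne_zero {ξ : ι → ℕ × ℕ} {i j : ι} (hj : ξ j = (0, 0))
    (hi : ξ i ≠ (0, 0)) : onDiagonalMatrix R ξ i j = 0 := by
  by_cases hfst : (ξ i).1 = 0
  · exact onDiagonalMatrix_eq_zero_of_snd (by rw [hj]) fun hsnd => hi (Prod.ext hfst hsnd)
  · exact onDiagonalMatrix_eq_zero_of_fst (by rw [hj]) hfst

theorem det_onDiagonalMatrix [Fintype ι] [DecidableEq ι] (ξ : ι → ℕ × ℕ) :
    (onDiagonalMatrix R ξ).det = (∏ j, ((Gon (ξ j)).card : R)) *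
      (Matrix.of fun i j => ((ξ j).1 : R) ^ (2 * (ξ i).1) * ((ξ j).2 : R) ^ (2 * (ξ i).2)).det := by
  rw [← Matrix.det_mul_row]
  exact congrArg Matrix.det (Matrix.ext (onDiagonalMatrix_apply ξ))

/-- The multi-indices `(0, 0), …, (0, m - 1)` followed by `(1, 0), …, (n, 0)`; for `m = p + 1` and
`n = p` this is `𝓒₁` followed by `𝓒₂`. -/
def axisIndex (m n : ℕ) : Fin m ⊕ Fin n → ℕ × ℕ :=
  Sum.elim (fun r => (0, (r : ℕ))) fun s => ((s : ℕ) + 1, 0)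

variable [IsDomain R] [CharZero R]

theorem det_onDiagonalMatrix_ne_zero_iff [Fintype ι] [DecidableEq ι] (ξ : ι → ℕ × ℕ) :
    (onDiagonalMatrix R ξ).det ≠ 0 ↔
      (Matrix.of fun i j =>
        ((ξ j).1 : R) ^ (2 * (ξ i).1) * ((ξ j).2 : R) ^ (2 * (ξ i).2)).det ≠ 0 := by
  rw [det_onDiagonalMatrix, mul_ne_zero_iff_left]
  exact Finset.prod_ne_zero_iff.2 fun j _ => natCast_card_Gon_ne_zero R (ξ j)

theorem det_onDiagonalMatrix_fst_axis_ne_zero (n k : ℕ) :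
    (onDiagonalMatrix R fun s : Fin n => ((s : ℕ) + k, 0)).det ≠ 0 := by
  simpa only [det_onDiagonalMatrix_ne_zero_iff, mul_zero, pow_zero, mul_one]
    using det_natCast_pow_ne_zero R n k

theorem det_onDiagonalMatrix_snd_axis_ne_zero (n k : ℕ) :
    (onDiagonalMatrix R fun r : Fin n => (0, (r : ℕ) + k)).det ≠ 0 := by
  simpa only [det_onDiagonalMatrix_ne_zero_iff, mul_zero, pow_zero, one_mul]
    using det_natCast_pow_ne_zero R n k

theorem det_onDiagonalMatrix_axisIndex_ne_zero (m n : ℕ) :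
    (onDiagonalMatrix R (axisIndex m n)).det ≠ 0 := by
  have lower_left : (onDiagonalMatrix R (axisIndex m n)).toBlocks₂₁ = 0 := by
    ext s r
    exact onDiagonalMatrix_eq_zero_of_fst rfl (Nat.succ_ne_zero s)
  rw [← Matrix.fromBlocks_toBlocks (onDiagonalMatrix R (axisIndex m n)), lower_left,
    Matrix.det_fromBlocks_zero₂₁]
  exact mul_ne_zero (det_onDiagonalMatrix_snd_axis_ne_zero m 0)
    (det_onDiagonalMatrix_fst_axis_ne_zero n 1)

end OnDiagonalMatrix

/-- `ξ` lists `𝓒₁`, then `𝓒₂`, then multi-indices with both coordinates positive; the last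
group stands in for `𝓒₃`, but it may have any length, leave `𝓘_p`, and repeat itself. -/
structure IsAxisOrdering (p : ℕ) {N : ℕ} (ξ : Fin N → ℕ × ℕ) : Prop where
  snd_axis (i : Fin N) : (i : ℕ) ≤ p → ξ i = (0, (i : ℕ))
  fst_axis (i : Fin N) : p + 1 ≤ (i : ℕ) → (i : ℕ) ≤ 2 * p → ξ i = ((i : ℕ) - p, 0)
  off_axes (i : Fin N) : 2 * p + 1 ≤ (i : ℕ) → 1 ≤ (ξ i).1 ∧ 1 ≤ (ξ i).2

namespace IsAxisOrdering

variable {p N : ℕ} {ξ : Fin N → ℕ × ℕ}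

theorem ne_zero (h : IsAxisOrdering p ξ) {j : Fin N} (hj : (j : ℕ) ≠ 0) : ξ j ≠ (0, 0) := by
  rcases le_or_gt (j : ℕ) p with h_snd | h_fst
  · simpa [h.snd_axis j h_snd] using hj
  rcases le_or_gt (j : ℕ) (2 * p) with h_fst' | h_off
  · simpa [h.fst_axis j h_fst h_fst', Nat.sub_eq_zero_iff_le] using h_fst
  · intro hzero
    simpa [hzero] using (h.off_axes j h_off).1

theorem fst_eq_zero_or_snd_eq_zero (h : IsAxisOrdering p ξ) {j : Fin N}
    (hj : (j : ℕ) < 2 * p + 1) : (ξ j).1 = 0 ∨ (ξ j).2 = 0 := by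
  rcases le_or_gt (j : ℕ) p with h_snd | h_fst
  · exact .inl (congrArg Prod.fst (h.snd_axis j h_snd))
  · exact .inr (congrArg Prod.snd (h.fst_axis j h_fst (Nat.lt_succ_iff.1 hj)))

theorem onDiagonalMatrix_lower_left_eq_zero (R : Type*) [CommRing R] (h : IsAxisOrdering p ξ)
    {i j : Fin N} (hi : 2 * p + 1 ≤ (i : ℕ)) (hj : (j : ℕ) < 2 * p + 1) :
    onDiagonalMatrix R ξ i j = 0 := by
  obtain ⟨hi_fst, hi_snd⟩ := h.off_axes i hi
  rcases h.fst_eq_zero_or_snd_eq_zero hj with hj_fst | hj_snd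
  · exact onDiagonalMatrix_eq_zero_of_fst hj_fst (Nat.one_le_iff_ne_zero.1 hi_fst)
  · exact onDiagonalMatrix_eq_zero_of_snd hj_snd (Nat.one_le_iff_ne_zero.1 hi_snd)

theorem det_onDiagonalMatrix_upper_left_ne_zero (R : Type*) [CommRing R] [IsDomain R] [CharZero R]
    (h : IsAxisOrdering p ξ) (hle : 2 * p + 1 ≤ N) :
    ((onDiagonalMatrix R ξ).submatrix (Fin.castLE hle) (Fin.castLE hle)).det ≠ 0 := by
  let e : Fin (p + 1) ⊕ Fin p ≃ Fin (2 * p + 1) := finSumFinEquiv.trans (finCongr (by omega))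
  have axisIndex_eq : (fun i => ξ (Fin.castLE hle (e i))) = axisIndex (p + 1) p := by
    funext i
    rcases i with r | s
    · exact h.snd_axis _ (Nat.lt_succ_iff.1 r.isLt)
    · have index_eq : (Fin.castLE hle (e (.inr s)) : ℕ) = p + 1 + s := rfl
      rw [h.fst_axis _ (by omega) (by omega), index_eq]
      exact Prod.ext (by simp only [axisIndex, Sum.elim_inr]; omega) rfl
  rw [← Matrix.det_submatrix_equiv_self e]
  change (onDiagonalMatrix R fun i => ξ (Fin.castLE hle (e i))).det ≠ 0
  rw [axisIndex_eq]
  exact det_onDiagonalMatrix_axisIndex_ne_zero (p + 1) p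

end IsAxisOrdering

theorem card_multiIndex_sub_card_axes (p : ℕ) :
    (p + 1) * (p + 2) / 2 - (2 * p + 1) = p * (p - 1) / 2 := by
  rcases p with _ | q
  · rfl
  have h_expand : (q + 1 + 1) * (q + 1 + 2) = (q + 1) * q + 2 * (2 * (q + 1) + 1) := by ring
  rw [h_expand, Nat.add_mul_div_left _ _ two_pos, Nat.add_sub_cancel, Nat.add_sub_cancel]

theorem on_diagonal_coefficient_matrix_block_structure_general
    {R : Type*} [CommRing R] [IsDomain R] [CharZero R] {p N : ℕ} (hle : 2 * p + 1 ≤ N)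
    {ξ : Fin N → ℕ × ℕ} (hξ : IsAxisOrdering p ξ) {K : Matrix (Fin N) (Fin N) R}
    (hK : ∀ i j, K i j = ∑ β ∈ Gon (ξ j),
      (β.1 : R) ^ (2 * (ξ i).1) * (β.2 : R) ^ (2 * (ξ i).2)) :
    K ⟨0, by omega⟩ ⟨0, by omega⟩ = 1 ∧
    (∀ j : Fin N, j ≠ ⟨0, by omega⟩ → K j ⟨0, by omega⟩ = 0) ∧
    (∀ i j : Fin N, 2 * p + 1 ≤ (i : ℕ) → (j : ℕ) < 2 * p + 1 → K i j = 0) ∧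
    K.det =
      (K.submatrix (Fin.castLE hle) (Fin.castLE hle)).det *
        (K.submatrix
          (fun i : Fin (N - (2 * p + 1)) => Fin.cast (Nat.add_sub_of_le hle) (Fin.natAdd _ i))
          fun j : Fin (N - (2 * p + 1)) =>
            Fin.cast (Nat.add_sub_of_le hle) (Fin.natAdd _ j)).det ∧
    (K.submatrix (Fin.castLE hle) (Fin.castLE hle)).det ≠ 0 := by
  obtain rfl : K = onDiagonalMatrix R ξ := Matrix.ext hK
  have hξ_zero : ξ ⟨0, by omega⟩ = (0, 0) := hξ.snd_axis _ (Nat.zero_le p)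
  have lower_left (i j : Fin N) (hi : 2 * p + 1 ≤ (i : ℕ)) (hj : (j : ℕ) < 2 * p + 1) :=
    hξ.onDiagonalMatrix_lower_left_eq_zero R hi hj
  exact ⟨onDiagonalMatrix_apply_eq_one hξ_zero,
    fun _ hj => onDiagonalMatrix_eq_zero_of_ne_zero hξ_zero (hξ.ne_zero (Fin.val_ne_of_ne hj)),
    lower_left,
    det_eq_det_mul_det_of_lower_left_eq_zero hle _ lower_left,
    hξ.det_onDiagonalMatrix_upper_left_ne_zero R hle⟩

/-- block structure of the on-diagonal coefficient matrix `K` under the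
ordering `𝓒₁, 𝓒₂, 𝓒₃` of `𝓘_p`, and non-singularity of the upper-left block `A`. -/
theorem on_diagonal_coefficient_matrix_block_structure
    (p : ℕ) (hp : 1 ≤ p) (Np : ℕ) (hNp : Np = (p + 1) * (p + 2) / 2)
    (hle : 2 * p + 1 ≤ Np)
    (ξ : Fin Np → ℕ × ℕ) (hξinj : Function.Injective ξ)
    (hξmem : ∀ i, (ξ i).1 + (ξ i).2 ≤ p)
    (hξsurj : ∀ γ : ℕ × ℕ, γ.1 + γ.2 ≤ p → ∃ i, ξ i = γ)
    (hord1 : ∀ i : Fin Np, (i : ℕ) ≤ p → ξ i = (0, (i : ℕ)))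
    (hord2 : ∀ i : Fin Np, p + 1 ≤ (i : ℕ) → (i : ℕ) ≤ 2 * p → ξ i = ((i : ℕ) - p, 0))
    (hord3 : ∀ i : Fin Np, 2 * p + 1 ≤ (i : ℕ) → 1 ≤ (ξ i).1 ∧ 1 ≤ (ξ i).2)
    (K : Matrix (Fin Np) (Fin Np) ℝ)
    (hK : ∀ i j, K i j = ∑ β ∈ Gon (ξ j),
      (β.1 : ℝ) ^ (2 * (ξ i).1) * (β.2 : ℝ) ^ (2 * (ξ i).2)) :
    K ⟨0, by omega⟩ ⟨0, by omega⟩ = 1 ∧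
    (∀ j : Fin Np, j ≠ ⟨0, by omega⟩ → K j ⟨0, by omega⟩ = 0) ∧
    (∀ i j : Fin Np, 2 * p + 1 ≤ (i : ℕ) → (j : ℕ) < 2 * p + 1 → K i j = 0) ∧
    Np - (2 * p + 1) = p * (p - 1) / 2 ∧
    K.det =
      (Matrix.of fun i j : Fin (2 * p + 1) =>
          K (Fin.castLE hle i) (Fin.castLE hle j)).det *
        (Matrix.of fun i j : Fin (Np - (2 * p + 1)) =>
          K ⟨2 * p + 1 + (i : ℕ), by have := i.isLt; omega⟩
            ⟨2 * p + 1 + (j : ℕ), by have := j.isLt; omega⟩).det ∧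
    (Matrix.of fun i j : Fin (2 * p + 1) =>
        K (Fin.castLE hle i) (Fin.castLE hle j)).det ≠ 0 := by
  obtain ⟨corner, first_column, lower_left, det_eq, det_ne_zero⟩ :=
    on_diagonal_coefficient_matrix_block_structure_general hle ⟨hord1, hord2, hord3⟩ hK
  exact ⟨corner, first_column, lower_left, hNp ▸ card_multiIndex_sub_card_axes p, det_eq,
    det_ne_zero⟩
end

section
/- Let p ≥ 2 and fix an enumeration (ξ₁,…,ξ_m) of 𝓒₃ = {ξ ∈ ℕ² : ξ₁ ≥ 1, ξ₂ ≥ 1, ξ₁+ξ₂ ≤ p}, where m = p(p−1)/2. For real variables x₁,…,x_{p−1}, define E ∈ ℝ^{m×m} by E_{ij} = x_{ξ_{j,1}}^{ξ_{i,1}} · x_{ξ_{j,2}}^{ξ_{i,2}}, where ξ_i = (ξ_{i,1}, ξ_{i,2}) and ξ_j = (ξ_{j,1}, ξ_{j,2}). Then there exists a nonzero real constant C (depending only on p and the enumeration) such that for all (x₁,…,x_{p−1}) ∈ ℝ^{p−1}: det E = C · ∏_{1≤j≤p−1} x_j^{2(p−j)} · ∏_{1≤i<j≤p−1} (x_j −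 x_i)^{2(p−j)}. -/
/-!
A matrix that is triangular for a *partial* order on its index set has the product of its diagonal
as determinant. If the exponents range over a lower set of `κ → ℕ`, this applies twice. Passing
from monomials to products of monic polynomials `P k n` of degree `n` multiplies the matrix by a
unitriangular one, because a product of such polynomials only involves monomials below its leading
one. When `P k n` is the Newton polynomial `∏ s < n, (X - x k s)`, the resulting matrix of values
at the grid points is itself triangular, because these polynomials vanish at all earlier nodes.
Exponents starting at `1` instead of `0` only contribute one factor `x k n` per node.
-/

open Finset Polynomial

section GeneralizedVandermonde

variable {R ι κ : Type*} [CommRing R] [Fintype ι]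

theorem det_eq_prod_diag_of_partialOrder {α : Type*} [PartialOrder α] [DecidableEq ι]
    {f : ι → α} (hf : f.Injective) (M : Matrix ι ι R) (hM : ∀ i j, M i j ≠ 0 → f j ≤ f i) :
    M.det = ∏ i, M i i := by
  let g : ι → LinearExtension α := toLinearExtension ∘ f
  have hg : g.Injective := fun _ _ h => hf h
  let _ : LinearOrder ι := LinearOrder.lift' g hg
  convert Matrix.det_of_isLowerTriangular M fun i j hij => ?_
  by_contra hne
  have hji : g j ≤ g i := toLinearExtension.monotone (hM i j hne)
  exact hji.not_gt hij

variable [Fintype κ] {ξ : ι → κ → ℕ}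

theorem prod_eval_eq_sum_of_isLowerSet (hξ : ξ.Injective) (hlower : IsLowerSet (Set.range ξ))
    (P : κ → R[X]) (i : ι) (hdeg : ∀ k, (P k).natDegree ≤ ξ i k) (y : κ → R) :
    ∏ k, (P k).eval (y k) = ∑ j, (∏ k, (P k).coeff (ξ j k)) * ∏ k, y k ^ ξ j k := by
  classical
  let term (a : κ → ℕ) : R := ∏ k, (P k).coeff (a k) * y k ^ a k
  have below_mem_range : Fintype.piFinset (fun k => range (ξ i k + 1)) ⊆ univ.image ξ := by
    intro a ha
    simp only [Fintype.mem_piFinset, mem_range, Order.lt_add_one_iff] at ha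
    simpa using hlower (show a ≤ ξ i from ha) ⟨i, rfl⟩
  have term_eq_zero : ∀ a ∈ univ.image ξ,
      a ∉ Fintype.piFinset (fun k => range (ξ i k + 1)) → term a = 0 := by
    intro a _ ha
    simp only [Fintype.mem_piFinset, mem_range, Order.lt_add_one_iff, not_forall, not_le] at ha
    obtain ⟨k, hk⟩ := ha
    refine prod_eq_zero (mem_univ k) ?_
    rw [coeff_eq_zero_of_natDegree_lt ((hdeg k).trans_lt hk), zero_mul]
  calc ∏ k, (P k).eval (y k)
      = ∏ k, ∑ n ∈ range (ξ i k + 1), (P k).coeff n * y k ^ n :=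
        prod_congr rfl fun k _ => eval_eq_sum_range' (Nat.lt_succ_of_le (hdeg k)) _
    _ = ∑ a ∈ Fintype.piFinset (fun k => range (ξ i k + 1)), term a := prod_univ_sum _ _
    _ = ∑ a ∈ univ.image ξ, term a := sum_subset below_mem_range term_eq_zero
    _ = ∑ j, term (ξ j) := sum_image hξ.injOn
    _ = ∑ j, (∏ k, (P k).coeff (ξ j k)) * ∏ k, y k ^ ξ j k :=
        sum_congr rfl fun _ _ => prod_mul_distrib

variable [DecidableEq ι]

theorem det_prod_eval_eq_det_prod_pow (hξ : ξ.Injective) (hlower : IsLowerSet (Set.range ξ))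
    (P : κ → ℕ → R[X]) (hdeg : ∀ k n, (P k n).natDegree = n) (hmonic : ∀ k n, (P k n).Monic)
    (y : ι → κ → R) :
    (Matrix.of fun i j => ∏ k, (P k (ξ i k)).eval (y j k)).det =
      (Matrix.of fun i j => ∏ k, y j k ^ ξ i k).det := by
  let A : Matrix ι ι R := Matrix.of fun i j => ∏ k, (P k (ξ i k)).coeff (ξ j k)
  have factorization : (Matrix.of fun i j => ∏ k, (P k (ξ i k)).eval (y j k)) =
      A * Matrix.of fun i j => ∏ k, y j k ^ ξ i k := by
    ext i j
    exact prod_eval_eq_sum_of_isLowerSet hξ hlower _ i (fun k => (hdeg k _).le) (y j)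
  have A_triangular (i j : ι) (hA : A i j ≠ 0) : ξ j ≤ ξ i := fun k => by
    contrapose! hA
    exact prod_eq_zero (mem_univ k) (coeff_eq_zero_of_natDegree_lt (by rwa [hdeg]))
  have A_diag (i : ι) : A i i = 1 := prod_eq_one fun k _ => by
    simpa only [hdeg] using (hmonic k (ξ i k)).coeff_natDegree
  rw [factorization, Matrix.det_mul, det_eq_prod_diag_of_partialOrder hξ A A_triangular,
    prod_eq_one fun i _ => A_diag i, one_mul]

theorem det_prod_pow_of_isLowerSet (hξ : ξ.Injective) (hlower : IsLowerSet (Set.range ξ))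
    (x : κ → ℕ → R) :
    (Matrix.of fun i j => ∏ k, x k (ξ j k) ^ ξ i k).det =
      ∏ i, ∏ k, ∏ s ∈ range (ξ i k), (x k (ξ i k) - x k s) := by
  nontriviality R
  let N : Matrix ι ι R := Matrix.of fun i j =>
    ∏ k, (Lagrange.nodal (range (ξ i k)) (x k)).eval (x k (ξ j k))
  have N_triangular (i j : ι) (hN : N.transpose i j ≠ 0) : ξ j ≤ ξ i := fun k => by
    contrapose! hN
    exact prod_eq_zero (mem_univ k) (Lagrange.eval_nodal_at_node (mem_range.2 hN))
  calc (Matrix.of fun i j => ∏ k, x k (ξ j k) ^ ξ i k).det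
      = N.det := (det_prod_eval_eq_det_prod_pow hξ hlower
          (fun k n => Lagrange.nodal (range n) (x k))
          (fun _ n => by rw [Lagrange.natDegree_nodal, card_range])
          (fun _ _ => Lagrange.nodal_monic) _).symm
    _ = ∏ i, N i i := by
        rw [← Matrix.det_transpose, det_eq_prod_diag_of_partialOrder hξ _ N_triangular]
        rfl
    _ = ∏ i, ∏ k, ∏ s ∈ range (ξ i k), (x k (ξ i k) - x k s) := by
        simp only [N, Matrix.of_apply, Lagrange.eval_nodal]

theorem det_prod_pow_of_Icc_one_subset_range (hξ : ξ.Injective) (hpos : ∀ i, 1 ≤ ξ i)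
    (hlower : ∀ i, Set.Icc 1 (ξ i) ⊆ Set.range ξ) (x : κ → ℕ → R) :
    (Matrix.of fun i j => ∏ k, x k (ξ j k) ^ ξ i k).det =
      ∏ i, ∏ k, (x k (ξ i k) * ∏ s ∈ Ico 1 (ξ i k), (x k (ξ i k) - x k s)) := by
  obtain ⟨η, rfl⟩ : ∃ η : ι → κ → ℕ, ξ = fun i => η i + 1 :=
    ⟨fun i => ξ i - 1, funext fun i => (tsub_add_cancel_of_le (hpos i)).symm⟩
  have hη : η.Injective := fun i j h => hξ (congrArg (· + 1) h)
  have hηlower : IsLowerSet (Set.range η) := by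
    rintro _ b hb ⟨i, rfl⟩
    obtain ⟨j, hj⟩ := hlower i ⟨le_add_self, add_le_add_left hb 1⟩
    exact ⟨j, add_right_cancel hj⟩
  calc (Matrix.of fun i j => ∏ k, x k (η j k + 1) ^ (η i k + 1)).det
      = (Matrix.of fun i j => (∏ k, x k (η j k + 1)) * ∏ k, x k (η j k + 1) ^ η i k).det := by
        simp only [pow_succ', prod_mul_distrib]
    _ = (∏ i, ∏ k, x k (η i k + 1)) *
          ∏ i, ∏ k, ∏ s ∈ range (η i k), (x k (η i k + 1) - x k (s + 1)) := by
        rw [← det_prod_pow_of_isLowerSet hη hηlower fun k n => x k (n + 1)]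
        exact Matrix.det_mul_row _ _
    _ = ∏ i, ∏ k, (x k (η i k + 1) *
          ∏ s ∈ Ico 1 (η i k + 1), (x k (η i k + 1) - x k s)) := by
        simp only [prod_mul_distrib, prod_Ico_eq_prod_range, add_tsub_cancel_right, add_comm 1]

theorem det_pow_mul_pow_of_Icc_one_subset_range {ξ : ι → ℕ × ℕ} (hξ : ξ.Injective)
    (hpos : ∀ i, 1 ≤ ξ i) (hlower : ∀ i, Set.Icc 1 (ξ i) ⊆ Set.range ξ) (x y : ℕ → R) :
    (Matrix.of fun i j => x (ξ j).1 ^ (ξ i).1 * y (ξ j).2 ^ (ξ i).2).det =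
      ∏ i, (x (ξ i).1 * ∏ s ∈ Ico 1 (ξ i).1, (x (ξ i).1 - x s)) *
        (y (ξ i).2 * ∏ s ∈ Ico 1 (ξ i).2, (y (ξ i).2 - y s)) := by
  let η : ι → Fin 2 → ℕ := fun i => ![(ξ i).1, (ξ i).2]
  have hη : η.Injective := fun i j h => hξ (Prod.ext (congrFun h 0) (congrFun h 1))
  have hηpos (i : ι) : 1 ≤ η i := Fin.forall_fin_two.2 ⟨(hpos i).1, (hpos i).2⟩
  have hηlower (i : ι) : Set.Icc 1 (η i) ⊆ Set.range η := by
    rintro a ⟨ha, hai⟩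
    obtain ⟨j, hj⟩ := hlower i (show (a 0, a 1) ∈ Set.Icc 1 (ξ i) from
      ⟨⟨ha 0, ha 1⟩, ⟨hai 0, hai 1⟩⟩)
    exact ⟨j, funext (Fin.forall_fin_two.2 ⟨congrArg Prod.fst hj, congrArg Prod.snd hj⟩)⟩
  simpa [η, Fin.prod_univ_two] using
    det_prod_pow_of_Icc_one_subset_range hη hηpos hηlower ![x, y]

end GeneralizedVandermonde

/-- The index set `𝓒₃` of pairs of positive integers with sum at most `p`. -/
def positiveTriangle (p : ℕ) : Finset (ℕ × ℕ) :=
  {γ ∈ Icc 1 p ×ˢ Icc 1 p | γ.1 + γ.2 ≤ p}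

theorem mem_positiveTriangle {p : ℕ} {γ : ℕ × ℕ} :
    γ ∈ positiveTriangle p ↔ 1 ≤ γ.1 ∧ 1 ≤ γ.2 ∧ γ.1 + γ.2 ≤ p := by
  simp only [positiveTriangle, mem_filter, mem_product, mem_Icc]
  omega

theorem prod_positiveTriangle_mul {M : Type*} [CommMonoid M] (p : ℕ) (g : ℕ → M) :
    ∏ γ ∈ positiveTriangle p, g γ.1 * g γ.2 = ∏ j ∈ Icc 1 (p - 1), g j ^ (2 * (p - j)) := by
  have prod_fst : ∏ γ ∈ positiveTriangle p, g γ.1 = ∏ j ∈ Icc 1 (p - 1), g j ^ (p - j) := by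
    rw [prod_finset_product _ (Icc 1 (p - 1)) fun j => Icc 1 (p - j)]
    · simp
    · intro γ
      simp only [mem_positiveTriangle, mem_Icc]
      omega
  have prod_snd : ∏ γ ∈ positiveTriangle p, g γ.2 = ∏ j ∈ Icc 1 (p - 1), g j ^ (p - j) := by
    rw [prod_finset_product_right _ (Icc 1 (p - 1)) fun j => Icc 1 (p - j)]
    · simp
    · intro γ
      simp only [mem_positiveTriangle, mem_Icc]
      omega
  simp only [prod_mul_distrib, prod_fst, prod_snd, two_mul, pow_add]

theorem on_diagonal_monomial_determinant_general {R ι : Type*} [CommRing R] [Fintype ι]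
    [DecidableEq ι] {p : ℕ} {ξ : ι → ℕ × ℕ} (hξ : ξ.Injective)
    (hrange : Set.range ξ = positiveTriangle p) (x : ℕ → R) :
    (Matrix.of fun i j => x (ξ j).1 ^ (ξ i).1 * x (ξ j).2 ^ (ξ i).2).det =
      (∏ j ∈ Icc 1 (p - 1), x j ^ (2 * (p - j))) *
        ∏ j ∈ Icc 1 (p - 1), ∏ i ∈ Ico 1 j, (x j - x i) ^ (2 * (p - j)) := by
  have mem_range_iff (γ : ℕ × ℕ) : γ ∈ Set.range ξ ↔ 1 ≤ γ.1 ∧ 1 ≤ γ.2 ∧ γ.1 + γ.2 ≤ p := by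
    rw [hrange, mem_coe, mem_positiveTriangle]
  have hpos (i : ι) : 1 ≤ ξ i := by
    obtain ⟨h₁, h₂, -⟩ := (mem_range_iff (ξ i)).1 ⟨i, rfl⟩
    exact ⟨h₁, h₂⟩
  have hlower (i : ι) : Set.Icc 1 (ξ i) ⊆ Set.range ξ := fun γ ⟨hγ, hγi⟩ => by
    obtain ⟨-, -, hi⟩ := (mem_range_iff (ξ i)).1 ⟨i, rfl⟩
    exact (mem_range_iff γ).2 ⟨hγ.1, hγ.2, (add_le_add hγi.1 hγi.2).trans hi⟩
  have image_eq : univ.image ξ = positiveTriangle p := by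
    rw [← coe_inj, coe_image, coe_univ, Set.image_univ, hrange]
  let g (n : ℕ) : R := x n * ∏ s ∈ Ico 1 n, (x n - x s)
  calc (Matrix.of fun i j => x (ξ j).1 ^ (ξ i).1 * x (ξ j).2 ^ (ξ i).2).det
      = ∏ i, g (ξ i).1 * g (ξ i).2 :=
        det_pow_mul_pow_of_Icc_one_subset_range hξ hpos hlower x x
    _ = ∏ γ ∈ positiveTriangle p, g γ.1 * g γ.2 := by rw [← image_eq, prod_image hξ.injOn]
    _ = ∏ j ∈ Icc 1 (p - 1), g j ^ (2 * (p - j)) := prod_positiveTriangle_mul p g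
    _ = _ := by simp only [g, mul_pow, prod_pow, prod_mul_distrib]

/-- determinant factorization of the monomial matrix `E` built from the
index set `𝓒₃ = {ξ ∈ ℕ² : ξ₁ ≥ 1, ξ₂ ≥ 1, ξ₁+ξ₂ ≤ p}`. -/
theorem on_diagonal_monomial_determinant
    (p : ℕ) (hp : 2 ≤ p) (m : ℕ) (hm : m = p * (p - 1) / 2)
    (ξ : Fin m → ℕ × ℕ) (hξinj : Function.Injective ξ)
    (hξmem : ∀ i, 1 ≤ (ξ i).1 ∧ 1 ≤ (ξ i).2 ∧ (ξ i).1 + (ξ i).2 ≤ p)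
    (hξsurj : ∀ γ : ℕ × ℕ, 1 ≤ γ.1 → 1 ≤ γ.2 → γ.1 + γ.2 ≤ p → ∃ i, ξ i = γ) :
    ∃ C : ℝ, C ≠ 0 ∧ ∀ x : ℕ → ℝ,
      (Matrix.of fun i j : Fin m =>
          x (ξ j).1 ^ (ξ i).1 * x (ξ j).2 ^ (ξ i).2).det =
        C * (∏ j ∈ Finset.Icc 1 (p - 1), x j ^ (2 * (p - j))) *
          ∏ j ∈ Finset.Icc 1 (p - 1), ∏ i ∈ Finset.Ico 1 j, (x j - x i) ^ (2 * (p - j)) := by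
  have hrange : Set.range ξ = positiveTriangle p := Set.ext fun γ => by
    rw [mem_coe, mem_positiveTriangle]
    exact ⟨fun ⟨i, hi⟩ => hi ▸ hξmem i, fun h => hξsurj γ h.1 h.2.1 h.2.2⟩
  exact ⟨1, one_ne_zero, fun x => by
    rw [one_mul, on_diagonal_monomial_determinant_general hξinj hrange]⟩
end

section
/- Let p ∈ ℕ with p ≥ 2 and let K ∈ ℝ^{N_p×N_p} be the off-diagonal coefficient matrix for a fixed enumeration (ξ₁,…,ξ_{N_p}) of 𝓘_p. Then K = E·H, where H ∈ ℝ^{N_p×N_p} is the diagonal matrix with H_{jj} = 2/(ξ_{j,1}ξ_{j,2}) if ξ_{j,1} = ξ_{j,2} and H_{jj} = 4/(ξ_{j,1}ξ_{j,2}) otherwise, and E ∈ ℝ^{N_p×N_p} is given by E_{ij} = ξ_{j,1}^{2ξ_{i,1}} ξ_{j,2}^{2ξ_{i,2}} + ξ_{j,2}^{2ξ_{i,1}} ξ_{j,1}^{2ξ_{i,2}}, with ξ_i = (ξ_{i,1},ξ_{i,2}) and ξ_j = (ξ_{j,1},ξ_{j,2}). -/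
/-- The set `𝓖_γ` of all sign changes of `(γ₁, γ₂)` and of the swapped pair `(γ₂, γ₁)`. -/
def Goff (γ : ℕ × ℕ) : Finset (ℤ × ℤ) :=
  {((γ.1 : ℤ), (γ.2 : ℤ)), (-(γ.1 : ℤ), (γ.2 : ℤ)), ((γ.1 : ℤ), -(γ.2 : ℤ)),
    (-(γ.1 : ℤ), -(γ.2 : ℤ)), ((γ.2 : ℤ), (γ.1 : ℤ)), (-(γ.2 : ℤ), (γ.1 : ℤ)),
    ((γ.2 : ℤ), -(γ.1 : ℤ)), (-(γ.2 : ℤ), -(γ.1 : ℤ))}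

/-!
For odd exponents `k` and `l`, the sign factor turns `β₁^k β₂^l` into `|β₁|^k |β₂|^l`, so every sign
change of `(a, b)` contributes `a^k b^l` and every sign change of `(b, a)` contributes `b^k a^l`.
For `a ≠ b` these two orbits are disjoint, with four points each, which gives the factor `4`; for
`a = b` they coincide, and `4 a^(k+l)` is `2` times the sum `a^k b^l + b^k a^l`. The even powers in
`E` are these odd ones times `a b`, which accounts for the denominators in `H`.
-/

/-- The orbit of `(γ₁, γ₂)` under sign changes of the two coordinates, i.e. one of the two halves
(unswapped and swapped) of `𝓖_γ`. A vanishing coordinate contributes only one sign. -/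
def signChanges (γ : ℕ × ℕ) : Finset (ℤ × ℤ) :=
  {(γ.1 : ℤ), -(γ.1 : ℤ)} ×ˢ {(γ.2 : ℤ), -(γ.2 : ℤ)}

theorem Goff_eq_signChanges_union_swap (γ : ℕ × ℕ) :
    Goff γ = signChanges γ ∪ signChanges γ.swap := by
  ext ⟨x, y⟩
  simp only [Goff, signChanges, Prod.fst_swap, Prod.snd_swap, Finset.mem_union,
    Finset.mem_product, Finset.mem_insert, Finset.mem_singleton, Prod.mk.injEq]
  tauto

theorem disjoint_signChanges_swap {γ : ℕ × ℕ} (hγ : γ.1 ≠ γ.2) :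
    Disjoint (signChanges γ) (signChanges γ.swap) := by
  refine Finset.disjoint_product.mpr (Or.inl ?_)
  simp only [Prod.fst_swap, Finset.disjoint_left, Finset.mem_insert, Finset.mem_singleton]
  omega

theorem sum_pair_neg_sign_mul_pow {R : Type*} [Ring R] (a : ℕ) {k : ℕ} (hk : Odd k) :
    ∑ x ∈ {(a : ℤ), -(a : ℤ)}, (x.sign : R) * (x : R) ^ k = 2 * (a : R) ^ k := by
  rcases eq_or_ne a 0 with rfl | ha
  · simp [hk.pos.ne']
  · have hne : (a : ℤ) ≠ -(a : ℤ) := by omega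
    rw [Finset.sum_pair hne]
    simp [hk.neg_pow, Int.sign_natCast_of_ne_zero ha, two_mul]

section CommRing

variable {R : Type*} [CommRing R] {k l : ℕ}

theorem sum_signChanges_sign_mul_pow (γ : ℕ × ℕ) (hk : Odd k) (hl : Odd l) :
    ∑ β ∈ signChanges γ, ((β.1 * β.2).sign : R) * ((β.1 : R) ^ k * (β.2 : R) ^ l) =
      4 * ((γ.1 : R) ^ k * (γ.2 : R) ^ l) := by
  calc ∑ β ∈ signChanges γ, ((β.1 * β.2).sign : R) * ((β.1 : R) ^ k * (β.2 : R) ^ l)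
      = ∑ β ∈ signChanges γ, ((β.1.sign : R) * (β.1 : R) ^ k) *
          ((β.2.sign : R) * (β.2 : R) ^ l) := by
        simp only [Int.sign_mul, Int.cast_mul, mul_mul_mul_comm]
    _ = (2 * (γ.1 : R) ^ k) * (2 * (γ.2 : R) ^ l) := by
        rw [signChanges, Finset.sum_product, ← sum_pair_neg_sign_mul_pow γ.1 hk,
          ← sum_pair_neg_sign_mul_pow γ.2 hl, Finset.sum_mul_sum]
    _ = 4 * ((γ.1 : R) ^ k * (γ.2 : R) ^ l) := by ring

theorem sum_Goff_sign_mul_pow (γ : ℕ × ℕ) (hk : Odd k) (hl : Odd l) :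
    ∑ β ∈ Goff γ, ((β.1 * β.2).sign : R) * ((β.1 : R) ^ k * (β.2 : R) ^ l) =
      ((γ.1 : R) ^ k * (γ.2 : R) ^ l + (γ.2 : R) ^ k * (γ.1 : R) ^ l) *
        if γ.1 = γ.2 then 2 else 4 := by
  rw [Goff_eq_signChanges_union_swap]
  split_ifs with hγ
  · have hswap : γ.swap = γ := Prod.ext hγ.symm hγ
    rw [hswap, Finset.union_self, sum_signChanges_sign_mul_pow γ hk hl, hγ]
    ring
  · rw [Finset.sum_union (disjoint_signChanges_swap hγ), sum_signChanges_sign_mul_pow γ hk hl,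
      sum_signChanges_sign_mul_pow γ.swap hk hl, Prod.fst_swap, Prod.snd_swap]
    ring

end CommRing

theorem pow_sub_one_mul_pow_sub_one_eq_div {G : Type*} [CommGroupWithZero G] {x y : G}
    (hx : x ≠ 0) (hy : y ≠ 0) {k l : ℕ} (hk : k ≠ 0) (hl : l ≠ 0) :
    x ^ (k - 1) * y ^ (l - 1) = x ^ k * y ^ l / (x * y) := by
  rw [eq_div_iff (mul_ne_zero hx hy), mul_mul_mul_comm, pow_sub_one_mul hk, pow_sub_one_mul hl]

theorem off_diagonal_coefficient_matrix_factorization_general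
    {F ι κ : Type*} [Field F] [Fintype κ] [DecidableEq κ]
    (η : ι → ℕ × ℕ) (hη : ∀ i, 0 < (η i).1 ∧ 0 < (η i).2)
    (ξ : κ → ℕ × ℕ) (hξ : ∀ j, ((ξ j).1 : F) ≠ 0 ∧ ((ξ j).2 : F) ≠ 0)
    (K : Matrix ι κ F)
    (hK : ∀ i j, K i j = ∑ β ∈ Goff (ξ j),
      ((β.1 * β.2).sign : F) *
        ((β.1 : F) ^ (2 * (η i).1 - 1) * (β.2 : F) ^ (2 * (η i).2 - 1))) :
    K = (Matrix.of fun i j =>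
          ((ξ j).1 : F) ^ (2 * (η i).1) * ((ξ j).2 : F) ^ (2 * (η i).2) +
            ((ξ j).2 : F) ^ (2 * (η i).1) * ((ξ j).1 : F) ^ (2 * (η i).2)) *
        Matrix.diagonal (fun j =>
          if (ξ j).1 = (ξ j).2 then 2 / (((ξ j).1 : F) * ((ξ j).2 : F))
          else 4 / (((ξ j).1 : F) * ((ξ j).2 : F))) := by
  ext i j
  obtain ⟨hm, hn⟩ := hη i
  obtain ⟨ha, hb⟩ := hξ j
  have hm_ne : 2 * (η i).1 ≠ 0 := by omega
  have hn_ne : 2 * (η i).2 ≠ 0 := by omega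
  have hm_odd : Odd (2 * (η i).1 - 1) := by grind
  have hn_odd : Odd (2 * (η i).2 - 1) := by grind
  rw [hK, Matrix.mul_diagonal, Matrix.of_apply, sum_Goff_sign_mul_pow (ξ j) hm_odd hn_odd,
    pow_sub_one_mul_pow_sub_one_eq_div ha hb hm_ne hn_ne,
    pow_sub_one_mul_pow_sub_one_eq_div hb ha hm_ne hn_ne, mul_comm ((ξ j).2 : F),
    ← add_div, ← ite_div, div_mul_eq_mul_div, mul_div_assoc]

/-- factorization `K = E·H` of the off-diagonal coefficient matrix. -/
theorem off_diagonal_coefficient_matrix_factorization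
    (p : ℕ) (hp : 2 ≤ p) (Np : ℕ)
    (ξ : Fin Np → ℕ × ℕ) (hξinj : Function.Injective ξ)
    (hξmem : ∀ i, 1 ≤ (ξ i).2 ∧ (ξ i).2 ≤ (ξ i).1 ∧ (ξ i).1 + (ξ i).2 ≤ p)
    (hξsurj : ∀ γ : ℕ × ℕ, 1 ≤ γ.2 → γ.2 ≤ γ.1 → γ.1 + γ.2 ≤ p → ∃ i, ξ i = γ)
    (K : Matrix (Fin Np) (Fin Np) ℝ)
    (hK : ∀ i j, K i j = ∑ β ∈ Goff (ξ j),
      ((β.1 * β.2).sign : ℝ) *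
        ((β.1 : ℝ) ^ (2 * (ξ i).1 - 1) * (β.2 : ℝ) ^ (2 * (ξ i).2 - 1))) :
    K = (Matrix.of fun i j : Fin Np =>
          ((ξ j).1 : ℝ) ^ (2 * (ξ i).1) * ((ξ j).2 : ℝ) ^ (2 * (ξ i).2) +
            ((ξ j).2 : ℝ) ^ (2 * (ξ i).1) * ((ξ j).1 : ℝ) ^ (2 * (ξ i).2)) *
        Matrix.diagonal (fun j =>
          if (ξ j).1 = (ξ j).2 then 2 / (((ξ j).1 : ℝ) * ((ξ j).2 : ℝ))
          else 4 / (((ξ j).1 : ℝ) * ((ξ j).2 : ℝ))) := by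
  have hξpos (i : Fin Np) : 0 < (ξ i).1 ∧ 0 < (ξ i).2 :=
    ⟨(hξmem i).1.trans (hξmem i).2.1, (hξmem i).1⟩
  have hξne (j : Fin Np) : ((ξ j).1 : ℝ) ≠ 0 ∧ ((ξ j).2 : ℝ) ≠ 0 :=
    (hξpos j).imp (Nat.cast_ne_zero.mpr ·.ne') (Nat.cast_ne_zero.mpr ·.ne')
  exact off_diagonal_coefficient_matrix_factorization_general ξ hξpos ξ hξne K hK
end

section
/- Let p ∈ ℕ with p ≥ 2 and fix an enumeration (ξ₁,…,ξ_{N_p}) of 𝓘_p = {(a,b) ∈ ℕ² : a ≥ b ≥ 1, a+b ≤ p}. For real variables x₁,…,x_{p−1}, define T ∈ ℝ^{N_p×N_p} by T_{ij} = x_{ξ_{j,1}}^{ξ_{i,1}} x_{ξ_{j,2}}^{ξ_{i,2}} + x_{ξ_{j,2}}^{ξ_{i,1}} x_{ξ_{j,1}}^{ξ_{i,2}}, where ξ_i = (ξ_{i,1},ξ_{i,2}) and ξ_j = (ξ_{j,1},ξ_{j,2}). Then there exists a nonzero real constant C (depending only on p and the enumeration) such that for all (x₁,…,x_{p−1}) ∈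 ℝ^{p−1}: det T = C · ∏_{1≤j≤⌊p/2⌋} x_j^{p+1−j} · ∏_{⌊p/2⌋<j≤p−1} x_j^{p−j} · ∏_{1≤i<j≤⌊p/2⌋} (x_j−x_i)^{p+1−j} · ∏_{1≤i<j, ⌊p/2⌋<j≤p−1} (x_j−x_i)^{p−j}. -/
/-!
Let `N a = X * ∏ i ∈ [1, a), (X - x i)`, a Newton basis of the polynomials without constant term.
Replacing each power `X ^ a` by `N a` in the symmetrized products `f(u) g(v) + f(v) g(u)` is a
unitriangular row operation, because `N a` is monic of degree `a` without constant term and the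
index set is an order ideal among the pairs `a ≥ b ≥ 1`. After the replacement the matrix is
triangular, since `N a` vanishes at `x c` for `1 ≤ c < a`, and its diagonal entries are
`N a (x a) * N b (x b)`, doubled when `a = b`.
-/

open Finset Polynomial

theorem det_of_ne_zero_imp_le {R m : Type*} [CommRing R] [Fintype m] [DecidableEq m]
    [PartialOrder m] (M : Matrix m m R) (hM : ∀ i j, M i j ≠ 0 → i ≤ j) :
    M.det = ∏ i, M i i := by
  let e : LinearExtension m ≃ m := Equiv.refl m
  let _ : Fintype (LinearExtension m) := Fintype.ofEquiv m e.symm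
  have hupper : (M.submatrix e e).IsUpperTriangular := fun i j (hji : j < i) => by
    by_contra hne
    exact hji.not_ge ((toLinearExtension (α := m)).monotone (hM (e i) (e j) hne))
  rw [← Matrix.det_submatrix_equiv_self e, Matrix.det_of_isUpperTriangular hupper]
  exact e.prod_comp fun i => M i i

section SortedPairs

/-- The pair `e` rearranged in weakly decreasing order. -/
def sortPair (e : ℕ × ℕ) : ℕ × ℕ := (max e.1 e.2, min e.1 e.2)

theorem sortPair_le {e q : ℕ × ℕ} (hq : q.2 ≤ q.1) (he : e ≤ q) : sortPair e ≤ q := by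
  simp only [sortPair, Prod.le_def] at he ⊢
  omega

theorem sortPair_eq_iff_of_le {e q : ℕ × ℕ} (hq : q.2 ≤ q.1) (he : e ≤ q) :
    sortPair e = q ↔ e = q := by
  simp only [sortPair, Prod.le_def, Prod.ext_iff] at he ⊢
  omega

/-- A finite order ideal, for the product order, in the set of pairs `(a, b)` with `a ≥ b ≥ 1`
(the partitions with exactly two parts). -/
structure IsTwoPartIdeal (s : Finset (ℕ × ℕ)) : Prop where
  one_le_snd : ∀ q ∈ s, 1 ≤ q.2
  snd_le_fst : ∀ q ∈ s, q.2 ≤ q.1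
  mem_of_le : ∀ q ∈ s, ∀ r : ℕ × ℕ, 1 ≤ r.2 → r.2 ≤ r.1 → r ≤ q → r ∈ s

theorem IsTwoPartIdeal.sortPair_mem {s : Finset (ℕ × ℕ)} (hs : IsTwoPartIdeal s) {q e : ℕ × ℕ}
    (hq : q ∈ s) (he : e ∈ Icc 1 q.1 ×ˢ Icc 1 q.2) : sortPair e ∈ s := by
  simp only [mem_product, mem_Icc] at he
  exact hs.mem_of_le q hq _ (le_min he.1.1 he.2.1) min_le_max
    (sortPair_le (hs.snd_le_fst q hq) ⟨he.1.2, he.2.2⟩)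

end SortedPairs

theorem eval_eq_sum_Icc {R : Type*} [Semiring R] {f : R[X]} {n : ℕ} (hdeg : f.natDegree ≤ n)
    (hzero : f.coeff 0 = 0) (y : R) :
    f.eval y = ∑ c ∈ Icc 1 n, f.coeff c * y ^ c := by
  rw [eval_eq_sum_range' (Nat.lt_succ_of_le hdeg), sum_range_eq_add_Ico _ n.succ_pos, hzero,
    zero_mul, zero_add]
  rfl

section SymmetrizedProducts

variable {R : Type*} [CommSemiring R]

/-- The symmetrization in `u`, `v` of the product `f(u) g(v)`. -/
def symmProd (f g : R[X]) (u v : R) : R :=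
  f.eval u * g.eval v + f.eval v * g.eval u

theorem symmProd_comm (f g : R[X]) (u v : R) : symmProd f g u v = symmProd g f u v := by
  unfold symmProd
  ring

theorem symmProd_X_pow_sortPair (e : ℕ × ℕ) (u v : R) :
    symmProd (X ^ (sortPair e).1) (X ^ (sortPair e).2) u v = symmProd (X ^ e.1) (X ^ e.2) u v := by
  rcases le_total e.1 e.2 with h | h
  · simpa only [sortPair, max_eq_right h, min_eq_left h] using symmProd_comm _ _ u v
  · simp only [sortPair, max_eq_left h, min_eq_right h]

theorem symmProd_eq_sum {f g : R[X]} {a b : ℕ} (hf : f.natDegree ≤ a) (hf₀ : f.coeff 0 = 0)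
    (hg : g.natDegree ≤ b) (hg₀ : g.coeff 0 = 0) (u v : R) :
    symmProd f g u v = ∑ e ∈ Icc 1 a ×ˢ Icc 1 b,
      f.coeff e.1 * g.coeff e.2 * symmProd (X ^ e.1) (X ^ e.2) u v := by
  simp only [symmProd, eval_eq_sum_Icc hf hf₀, eval_eq_sum_Icc hg hg₀, sum_mul_sum,
    ← sum_product', ← sum_add_distrib, eval_pow, eval_X]
  exact sum_congr rfl fun e _ => by ring

/-- The evaluation matrix of the symmetrized products of `P a` and `P b`, `(a, b) ∈ s`, at the
points `(x c, x d)`, `(c, d) ∈ s`. With `P a = X ^ a` it is the matrix `T`. -/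
def symmMatrix (P : ℕ → R[X]) (x : ℕ → R) (s : Finset (ℕ × ℕ)) : Matrix s s R :=
  Matrix.of fun q r => symmProd (P q.1.1) (P q.1.2) (x r.1.1) (x r.1.2)

/-- The row operation that turns symmetrized monomials into symmetrized products of the `P a`: the
entry at `(q, r)` is the coefficient of the symmetrized monomial with sorted exponents `r` in the
symmetrized product of `P q.1` and `P q.2`, for polynomials without constant term. -/
def sortedCoeffMatrix (P : ℕ → R[X]) (s : Finset (ℕ × ℕ)) : Matrix s s R :=
  Matrix.of fun q r => ∑ e ∈ Icc 1 q.1.1 ×ˢ Icc 1 q.1.2 with sortPair e = r,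
    (P q.1.1).coeff e.1 * (P q.1.2).coeff e.2

variable {P : ℕ → R[X]} {s : Finset (ℕ × ℕ)}

theorem sortedCoeffMatrix_mul_symmMatrix (hs : IsTwoPartIdeal s)
    (hdeg : ∀ a, 1 ≤ a → (P a).natDegree ≤ a) (hzero : ∀ a, 1 ≤ a → (P a).coeff 0 = 0)
    (x : ℕ → R) :
    sortedCoeffMatrix P s * symmMatrix (fun a => X ^ a) x s = symmMatrix P x s := by
  ext ⟨q, hq⟩ ⟨r, hr⟩
  have hb : 1 ≤ q.2 := hs.one_le_snd q hq
  have ha : 1 ≤ q.1 := hb.trans (hs.snd_le_fst q hq)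
  let term (e : ℕ × ℕ) : R := (P q.1).coeff e.1 * (P q.2).coeff e.2 *
    symmProd (X ^ e.1) (X ^ e.2) (x r.1) (x r.2)
  calc
    _ = ∑ k : s, ∑ e ∈ Icc 1 q.1 ×ˢ Icc 1 q.2 with sortPair e = k, term e := by
      simp only [Matrix.mul_apply, sortedCoeffMatrix, symmMatrix, Matrix.of_apply, sum_mul]
      refine sum_congr rfl fun k _ => sum_congr rfl fun e he => ?_
      rw [← (mem_filter.mp he).2, symmProd_X_pow_sortPair]
    _ = ∑ k ∈ s, ∑ e ∈ Icc 1 q.1 ×ˢ Icc 1 q.2 with sortPair e = k, term e :=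
      sum_coe_sort s fun k => ∑ e ∈ Icc 1 q.1 ×ˢ Icc 1 q.2 with sortPair e = k, term e
    _ = ∑ e ∈ Icc 1 q.1 ×ˢ Icc 1 q.2, term e :=
      sum_fiberwise_of_maps_to (fun e he => hs.sortPair_mem hq he) term
    _ = _ := (symmProd_eq_sum (hdeg _ ha) (hzero _ ha) (hdeg _ hb) (hzero _ hb) _ _).symm

theorem le_of_sortedCoeffMatrix_ne_zero (hs : IsTwoPartIdeal s) {q r : s}
    (h : sortedCoeffMatrix P s q r ≠ 0) : r ≤ q := by
  obtain ⟨e, he, -⟩ := exists_ne_zero_of_sum_ne_zero h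
  simp only [mem_filter, mem_product, mem_Icc] at he
  exact Subtype.coe_le_coe.mp
    (he.2 ▸ sortPair_le (hs.snd_le_fst q q.2) ⟨he.1.1.2, he.1.2.2⟩)

theorem sortedCoeffMatrix_apply_self (hs : IsTwoPartIdeal s)
    (hone : ∀ a, 1 ≤ a → (P a).coeff a = 1) (q : s) : sortedCoeffMatrix P s q q = 1 := by
  have hb : 1 ≤ q.1.2 := hs.one_le_snd q q.2
  have hab : q.1.2 ≤ q.1.1 := hs.snd_le_fst q q.2
  have hfiber : {e ∈ Icc 1 q.1.1 ×ˢ Icc 1 q.1.2 | sortPair e = q} = {q.1} := by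
    ext e
    simp only [mem_filter, mem_product, mem_Icc, mem_singleton]
    refine ⟨fun ⟨he, heq⟩ => (sortPair_eq_iff_of_le hab ⟨he.1.2, he.2.2⟩).mp heq, ?_⟩
    rintro rfl
    exact ⟨⟨⟨hb.trans hab, le_rfl⟩, hb, le_rfl⟩, (sortPair_eq_iff_of_le hab le_rfl).mpr rfl⟩
  simp only [sortedCoeffMatrix, Matrix.of_apply, hfiber, sum_singleton, hone _ hb,
    hone _ (hb.trans hab), mul_one]

theorem le_of_symmMatrix_ne_zero {x : ℕ → R} (hs : IsTwoPartIdeal s)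
    (hvanish : ∀ a c, 1 ≤ c → c < a → (P a).eval (x c) = 0) {q r : s}
    (h : symmMatrix P x s q r ≠ 0) : q ≤ r := by
  have hr : 1 ≤ r.1.2 := hs.one_le_snd r r.2
  have hr' : r.1.2 ≤ r.1.1 := hs.snd_le_fst r r.2
  have hq' : q.1.2 ≤ q.1.1 := hs.snd_le_fst q q.2
  have hle {a c : ℕ} (hc : 1 ≤ c) (hne : (P a).eval (x c) ≠ 0) : a ≤ c :=
    not_lt.mp fun hlt => hne (hvanish a c hc hlt)
  rw [symmMatrix, Matrix.of_apply, symmProd] at h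
  by_cases hzero : (P q.1.1).eval (x r.1.1) * (P q.1.2).eval (x r.1.2) = 0
  · rw [hzero, zero_add] at h
    have hle' : q.1.1 ≤ r.1.2 := hle hr (left_ne_zero_of_mul h)
    exact ⟨hle'.trans hr', hq'.trans hle'⟩
  · exact ⟨hle (hr.trans hr') (left_ne_zero_of_mul hzero), hle hr (right_ne_zero_of_mul hzero)⟩

theorem symmMatrix_apply_self {x : ℕ → R} (hs : IsTwoPartIdeal s)
    (hvanish : ∀ a c, 1 ≤ c → c < a → (P a).eval (x c) = 0) (q : s) :
    symmMatrix P x s q q = (if q.1.1 = q.1.2 then 2 else 1) *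
      ((P q.1.1).eval (x q.1.1) * (P q.1.2).eval (x q.1.2)) := by
  rw [symmMatrix, Matrix.of_apply, symmProd]
  split_ifs with hdiag
  · rw [hdiag, two_mul]
  · have hlt : q.1.2 < q.1.1 := (hs.snd_le_fst q q.2).lt_of_ne' hdiag
    rw [hvanish _ _ (hs.one_le_snd q q.2) hlt, zero_mul, add_zero, one_mul]

end SymmetrizedProducts

section Determinants

variable {R : Type*} [CommRing R] {P : ℕ → R[X]} {s : Finset (ℕ × ℕ)}

theorem det_sortedCoeffMatrix (hs : IsTwoPartIdeal s) (hone : ∀ a, 1 ≤ a → (P a).coeff a = 1) :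
    (sortedCoeffMatrix P s).det = 1 := by
  rw [← Matrix.det_transpose, det_of_ne_zero_imp_le (sortedCoeffMatrix P s).transpose
    fun _ _ h => le_of_sortedCoeffMatrix_ne_zero hs h]
  exact prod_eq_one fun q _ => sortedCoeffMatrix_apply_self hs hone q

theorem det_symmMatrix_X_pow_eq_det_symmMatrix (hs : IsTwoPartIdeal s)
    (hdeg : ∀ a, 1 ≤ a → (P a).natDegree ≤ a) (hzero : ∀ a, 1 ≤ a → (P a).coeff 0 = 0)
    (hone : ∀ a, 1 ≤ a → (P a).coeff a = 1) (x : ℕ → R) :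
    (symmMatrix (fun a => X ^ a) x s).det = (symmMatrix P x s).det := by
  rw [← sortedCoeffMatrix_mul_symmMatrix hs hdeg hzero, Matrix.det_mul,
    det_sortedCoeffMatrix hs hone, one_mul]

theorem det_symmMatrix_of_eval_eq_zero {x : ℕ → R} (hs : IsTwoPartIdeal s)
    (hvanish : ∀ a c, 1 ≤ c → c < a → (P a).eval (x c) = 0) :
    (symmMatrix P x s).det = ∏ q ∈ s, (if q.1 = q.2 then 2 else 1) *
      ((P q.1).eval (x q.1) * (P q.2).eval (x q.2)) := by
  rw [det_of_ne_zero_imp_le _ fun _ _ h => le_of_symmMatrix_ne_zero hs hvanish h,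
    prod_congr rfl fun q _ => symmMatrix_apply_self hs hvanish q]
  exact prod_coe_sort s fun q => (if q.1 = q.2 then 2 else 1) *
    ((P q.1).eval (x q.1) * (P q.2).eval (x q.2))

end Determinants

section NewtonBasis

variable {R : Type*} [CommRing R] (x : ℕ → R)

/-- The Newton polynomial `X (X - x 1) ⋯ (X - x (a - 1))`, of degree `a` for `1 ≤ a`; the nodes are
`0` and `x 1, x 2, …`. -/
noncomputable def newtonPoly (a : ℕ) : R[X] := X * Lagrange.nodal (Ico 1 a) x

theorem monic_newtonPoly (a : ℕ) : (newtonPoly x a).Monic :=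
  monic_X.mul Lagrange.nodal_monic

theorem natDegree_newtonPoly [Nontrivial R] {a : ℕ} (ha : 1 ≤ a) :
    (newtonPoly x a).natDegree = a := by
  rw [newtonPoly, monic_X.natDegree_mul Lagrange.nodal_monic, natDegree_X,
    Lagrange.natDegree_nodal, Nat.card_Ico, Nat.add_sub_cancel' ha]

theorem coeff_newtonPoly_self {a : ℕ} (ha : 1 ≤ a) : (newtonPoly x a).coeff a = 1 := by
  nontriviality R
  simpa only [natDegree_newtonPoly x ha] using (monic_newtonPoly x a).coeff_natDegree

theorem coeff_zero_newtonPoly (a : ℕ) : (newtonPoly x a).coeff 0 = 0 :=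
  coeff_X_mul_zero _

theorem eval_newtonPoly (a : ℕ) (y : R) :
    (newtonPoly x a).eval y = y * ∏ i ∈ Ico 1 a, (y - x i) := by
  rw [newtonPoly, eval_mul, eval_X, Lagrange.eval_nodal]

theorem eval_newtonPoly_node {a c : ℕ} (hc : 1 ≤ c) (hca : c < a) :
    (newtonPoly x a).eval (x c) = 0 := by
  rw [newtonPoly, eval_mul, Lagrange.eval_nodal_at_node (mem_Ico.mpr ⟨hc, hca⟩), mul_zero]

theorem det_symmMatrix_X_pow_eq_prod_newtonPoly {s : Finset (ℕ × ℕ)} (hs : IsTwoPartIdeal s) :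
    (symmMatrix (fun a => X ^ a) x s).det = ∏ q ∈ s, (if q.1 = q.2 then 2 else 1) *
      ((newtonPoly x q.1).eval (x q.1) * (newtonPoly x q.2).eval (x q.2)) := by
  nontriviality R
  rw [det_symmMatrix_X_pow_eq_det_symmMatrix hs (fun a ha => (natDegree_newtonPoly x ha).le)
    (fun a _ => coeff_zero_newtonPoly x a) fun a ha => coeff_newtonPoly_self x ha]
  exact det_symmMatrix_of_eval_eq_zero hs fun a c => eval_newtonPoly_node x

end NewtonBasis

section Triangle

/-- The index set `𝓘_p` of pairs `(a, b)` with `a ≥ b ≥ 1` and `a + b ≤ p`. -/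
def pairTriangle (p : ℕ) : Finset (ℕ × ℕ) :=
  {q ∈ range p ×ˢ range p | 1 ≤ q.2 ∧ q.2 ≤ q.1 ∧ q.1 + q.2 ≤ p}

theorem mem_pairTriangle {p : ℕ} {q : ℕ × ℕ} :
    q ∈ pairTriangle p ↔ 1 ≤ q.2 ∧ q.2 ≤ q.1 ∧ q.1 + q.2 ≤ p := by
  simp only [pairTriangle, mem_filter, mem_product, mem_range]
  omega

theorem isTwoPartIdeal_pairTriangle (p : ℕ) : IsTwoPartIdeal (pairTriangle p) where
  one_le_snd _ hq := (mem_pairTriangle.mp hq).1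
  snd_le_fst _ hq := (mem_pairTriangle.mp hq).2.1
  mem_of_le _ hq _ h₁ h₂ hle :=
    mem_pairTriangle.mpr ⟨h₁, h₂, (add_le_add hle.1 hle.2).trans (mem_pairTriangle.mp hq).2.2⟩

variable {M : Type*} [CommMonoid M] (p : ℕ)

theorem prod_pairTriangle_eq_prod_fst (f : ℕ → ℕ → M) :
    ∏ q ∈ pairTriangle p, f q.1 q.2 =
      ∏ a ∈ Icc 1 (p - 1), ∏ b ∈ Icc 1 (min a (p - a)), f a b :=
  prod_finset_product' _ _ _ fun q => by
    simp only [mem_pairTriangle, mem_Icc]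
    omega

theorem prod_pairTriangle_eq_prod_snd (f : ℕ → ℕ → M) :
    ∏ q ∈ pairTriangle p, f q.1 q.2 = ∏ b ∈ Icc 1 (p / 2), ∏ a ∈ Icc b (p - b), f a b :=
  prod_finset_product_right' _ _ _ fun q => by
    simp only [mem_pairTriangle, mem_Icc]
    omega

theorem prod_pairTriangle_ite_diag (m : M) :
    ∏ q ∈ pairTriangle p, (if q.1 = q.2 then m else 1) = m ^ (p / 2) := by
  rw [prod_pairTriangle_eq_prod_snd p fun a b => if a = b then m else 1]
  have hrow : ∀ b ∈ Icc 1 (p / 2), ∏ a ∈ Icc b (p - b), (if a = b then m else 1) = m := by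
    intro b hb
    rw [prod_ite_eq', if_pos]
    simp only [mem_Icc] at hb ⊢
    omega
  rw [prod_congr rfl hrow, prod_const, Nat.card_Icc, Nat.add_sub_cancel]

theorem prod_pairTriangle_mul (F : ℕ → M) :
    ∏ q ∈ pairTriangle p, F q.1 * F q.2 =
      (∏ j ∈ Icc 1 (p / 2), F j ^ (p + 1 - j)) *
        ∏ j ∈ Icc (p / 2 + 1) (p - 1), F j ^ (p - j) := by
  have hsplit (f : ℕ → M) : ∏ j ∈ Icc 1 (p - 1), f j =
      (∏ j ∈ Icc 1 (p / 2), f j) * ∏ j ∈ Icc (p / 2 + 1) (p - 1), f j :=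
    (prod_Ico_consecutive f (by omega) (by omega)).symm
  have hfst : ∏ q ∈ pairTriangle p, F q.1 =
      (∏ j ∈ Icc 1 (p / 2), F j ^ j) * ∏ j ∈ Icc (p / 2 + 1) (p - 1), F j ^ (p - j) := by
    simp only [prod_pairTriangle_eq_prod_fst p fun a _ => F a, prod_const, Nat.card_Icc,
      Nat.add_sub_cancel, hsplit]
    refine congrArg₂ _ (prod_congr rfl fun j hj => ?_) (prod_congr rfl fun j hj => ?_)
    · rw [min_eq_left (by rw [mem_Icc] at hj; omega)]
    · rw [min_eq_right (by rw [mem_Icc] at hj; omega)]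
  have hsnd : ∏ q ∈ pairTriangle p, F q.2 = ∏ j ∈ Icc 1 (p / 2), F j ^ (p - j + 1 - j) := by
    simp only [prod_pairTriangle_eq_prod_snd p fun _ b => F b, prod_const, Nat.card_Icc]
  rw [prod_mul_distrib, hfst, hsnd, mul_right_comm, ← prod_mul_distrib]
  refine congrArg (· * _) (prod_congr rfl fun j hj => ?_)
  have hexp : j + (p - j + 1 - j) = p + 1 - j := by
    rw [mem_Icc] at hj
    omega
  rw [← pow_add, hexp]

end Triangle

theorem det_symmMatrix_X_pow_pairTriangle {R : Type*} [CommRing R] (p : ℕ) (x : ℕ → R) :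
    (symmMatrix (fun a => X ^ a) x (pairTriangle p)).det =
      2 ^ (p / 2) * (∏ j ∈ Icc 1 (p / 2), x j ^ (p + 1 - j)) *
        (∏ j ∈ Icc (p / 2 + 1) (p - 1), x j ^ (p - j)) *
        (∏ j ∈ Icc 1 (p / 2), ∏ i ∈ Ico 1 j, (x j - x i) ^ (p + 1 - j)) *
        ∏ j ∈ Icc (p / 2 + 1) (p - 1), ∏ i ∈ Ico 1 j, (x j - x i) ^ (p - j) := by
  rw [det_symmMatrix_X_pow_eq_prod_newtonPoly x (isTwoPartIdeal_pairTriangle p), prod_mul_distrib,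
    prod_pairTriangle_ite_diag, prod_pairTriangle_mul p fun j => (newtonPoly x j).eval (x j)]
  simp only [eval_newtonPoly, mul_pow, prod_mul_distrib, prod_pow]
  ring

theorem off_diagonal_monomial_determinant_general {R ι : Type*} [CommRing R] [Fintype ι]
    [DecidableEq ι] (p : ℕ) (ξ : ι → ℕ × ℕ) (hξinj : Function.Injective ξ)
    (hξmem : ∀ i, 1 ≤ (ξ i).2 ∧ (ξ i).2 ≤ (ξ i).1 ∧ (ξ i).1 + (ξ i).2 ≤ p)
    (hξsurj : ∀ γ : ℕ × ℕ, 1 ≤ γ.2 → γ.2 ≤ γ.1 → γ.1 + γ.2 ≤ p → ∃ i, ξ i = γ) (x : ℕ → R) :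
    (Matrix.of fun i j : ι =>
        x (ξ j).1 ^ (ξ i).1 * x (ξ j).2 ^ (ξ i).2 +
          x (ξ j).2 ^ (ξ i).1 * x (ξ j).1 ^ (ξ i).2).det =
      2 ^ (p / 2) * (∏ j ∈ Icc 1 (p / 2), x j ^ (p + 1 - j)) *
        (∏ j ∈ Icc (p / 2 + 1) (p - 1), x j ^ (p - j)) *
        (∏ j ∈ Icc 1 (p / 2), ∏ i ∈ Ico 1 j, (x j - x i) ^ (p + 1 - j)) *
        ∏ j ∈ Icc (p / 2 + 1) (p - 1), ∏ i ∈ Ico 1 j, (x j - x i) ^ (p - j) := by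
  let e : ι ≃ pairTriangle p :=
    Equiv.ofBijective (fun i => ⟨ξ i, mem_pairTriangle.mpr (hξmem i)⟩)
      ⟨fun _ _ h => hξinj (congrArg Subtype.val h), fun ⟨γ, hγ⟩ =>
        have ⟨h₁, h₂, h₃⟩ := mem_pairTriangle.mp hγ
        (hξsurj γ h₁ h₂ h₃).imp fun _ h => Subtype.ext h⟩
  have he (i : ι) : (e i : ℕ × ℕ) = ξ i := rfl
  rw [← det_symmMatrix_X_pow_pairTriangle, ← Matrix.det_submatrix_equiv_self e]
  congr 1
  ext i j
  simp only [symmMatrix, symmProd, Matrix.submatrix_apply, Matrix.of_apply, he, eval_pow, eval_X]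

/-- determinant factorization of the symmetrized monomial matrix `T` built
from the index set `𝓘_p = {(a,b) ∈ ℕ² : a ≥ b ≥ 1, a+b ≤ p}`. -/
theorem off_diagonal_monomial_determinant
    (p : ℕ) (hp : 2 ≤ p) (Np : ℕ)
    (ξ : Fin Np → ℕ × ℕ) (hξinj : Function.Injective ξ)
    (hξmem : ∀ i, 1 ≤ (ξ i).2 ∧ (ξ i).2 ≤ (ξ i).1 ∧ (ξ i).1 + (ξ i).2 ≤ p)
    (hξsurj : ∀ γ : ℕ × ℕ, 1 ≤ γ.2 → γ.2 ≤ γ.1 → γ.1 + γ.2 ≤ p → ∃ i, ξ i = γ) :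
    ∃ C : ℝ, C ≠ 0 ∧ ∀ x : ℕ → ℝ,
      (Matrix.of fun i j : Fin Np =>
          x (ξ j).1 ^ (ξ i).1 * x (ξ j).2 ^ (ξ i).2 +
            x (ξ j).2 ^ (ξ i).1 * x (ξ j).1 ^ (ξ i).2).det =
        C * (∏ j ∈ Finset.Icc 1 (p / 2), x j ^ (p + 1 - j)) *
          (∏ j ∈ Finset.Icc (p / 2 + 1) (p - 1), x j ^ (p - j)) *
          (∏ j ∈ Finset.Icc 1 (p / 2), ∏ i ∈ Finset.Ico 1 j, (x j - x i) ^ (p + 1 - j)) *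
          ∏ j ∈ Finset.Icc (p / 2 + 1) (p - 1), ∏ i ∈ Finset.Ico 1 j,
            (x j - x i) ^ (p - j) :=
  ⟨2 ^ (p / 2), by positivity,
    off_diagonal_monomial_determinant_general p ξ hξinj hξmem hξsurj⟩
end
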